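/- Let p be a prime, e | p−1, G_e the subgroup of 𝔽_p^* of order e, m ≥ 1 an integer, and suppose p ≥ (2m·⌊e^{1/(2m+1)}⌋ + 2m + 2)·e. Then for pairwise distinct ξ₁, …, ξ_m ∈ 𝔽_p^* and arbitrary μ₁, …, μ_m ∈ 𝔽_p^*, one has #(G_e ∩ (μ₁G_e + ξ₁) ∩ ⋯ ∩ (μ_m G_e + ξ_m)) ≤ C(m)·e^{(m+1)/(2m+1)} for some constant C(m) depending only on m. -/

import Mathlib

/-!
Stepanov's method. Put `η₀ = 0`, `ηᵢ = ξᵢ`, so that `(x - ηᵢ) ^ e` takes a constant value `cᵢ ≠ 0`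
on the intersection, and let `P = ∑ b, (∏ i, (X - ηᵢ) ^ (e bᵢ)) q_b`, where the digits `bᵢ` are less
than `B` and the `q_b` have degree less than `A`. With `R = ∏ i, (X - ηᵢ)`, the operator
`(R d/dX) ^ k` maps each summand to the same power product times a polynomial of degree less than
`A + m k`. On the intersection the power products are the constants `∏ i, cᵢ ^ bᵢ`, so the vanishing
of `P` there to order `A` amounts to about `(m + 1) A²` linear conditions on the `A B ^ (m + 1)`
coefficients of the `q_b`. Hence `A` times the number of points is at most `deg P`, unless `P = 0`.

That `P ≠ 0` is shown by induction on the number of shifts. Suppose that a combination of the power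
products in `η₁, …, ηₙ` is divisible by `(X - η₀) ^ e`. Then so is its Wronskian with respect to
`R d/dX`, up to factors that do not vanish at `η₀`; but what remains of the Wronskian has degree
less than `e`. Thus the Wronskian vanishes, and its summands satisfy a common linear differential
equation in `R d/dX`. Comparing leading coefficients, the degrees of the solutions are roots of an
indicial polynomial of degree smaller than the number of summands, whereas linearly independent
polynomials span a space realizing at least as many degrees, which stay distinct in `F` when they
are below the characteristic. So nonzero summands are linearly dependent, contradicting the
induction hypothesis, and the combination we started with is zero. Applied to the coefficients of
the powers `(X - η₀) ^ (e k)`, this lets the digits of `η₀` be peeled off one at a time.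
-/

namespace VyuginShkredov

open Polynomial Lagrange Finset

section FirstOrderOp

variable {F : Type*} [CommRing F]

/-- The differential operator `Q ↦ R Q' + L Q`. When `R E' = L E`, it is the conjugate of
`R d/dX` by multiplication by `E`. -/
noncomputable def firstOrderOp (R L : F[X]) : Module.End F F[X] :=
  LinearMap.mulLeft F R ∘ₗ derivative + LinearMap.mulLeft F L

theorem firstOrderOp_apply (R L Q : F[X]) :
    firstOrderOp R L Q = R * derivative Q + L * Q := by
  simp [firstOrderOp]

theorem firstOrderOp_zero_apply (R Q : F[X]) : firstOrderOp R 0 Q = R * derivative Q := by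
  simp [firstOrderOp]

theorem firstOrderOp_pow_mul {R L E : F[X]} (hE : R * derivative E = L * E) (k : ℕ) (Q : F[X]) :
    (firstOrderOp R 0 ^ k) (E * Q) = E * (firstOrderOp R L ^ k) Q := by
  induction k with
  | zero => simp
  | succ k ih =>
    rw [pow_succ', pow_succ', Module.End.mul_apply, Module.End.mul_apply, ih,
      firstOrderOp_zero_apply, firstOrderOp_apply, derivative_mul]
    linear_combination (firstOrderOp R L ^ k) Q * hE

theorem natDegree_firstOrderOp_le {R L Q : F[X]} {m d : ℕ} (hR : R.natDegree ≤ m + 1)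
    (hL : L.natDegree ≤ m) (hQ : Q.natDegree ≤ d) : (firstOrderOp R L Q).natDegree ≤ d + m := by
  rw [firstOrderOp_apply]
  refine natDegree_add_le_of_degree_le ?_ (natDegree_mul_le.trans (by lia))
  rcases Nat.eq_zero_or_pos Q.natDegree with hQ0 | hQ0
  · simp [derivative_of_natDegree_zero hQ0]
  · have := natDegree_derivative_le Q
    exact natDegree_mul_le.trans (by lia)

theorem natDegree_firstOrderOp_pow_le {R L Q : F[X]} {m d : ℕ} (hR : R.natDegree ≤ m + 1)
    (hL : L.natDegree ≤ m) (hQ : Q.natDegree ≤ d) (k : ℕ) :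
    ((firstOrderOp R L ^ k) Q).natDegree ≤ d + m * k := by
  induction k with
  | zero => simpa
  | succ k ih =>
    rw [pow_succ', Module.End.mul_apply, mul_add_one, ← add_assoc]
    exact natDegree_firstOrderOp_le hR hL ih

theorem pow_dvd_firstOrderOp_pow {f R P : F[X]} {t : ℕ} (hR : f ∣ R) (hP : f ^ t ∣ P) (k : ℕ) :
    f ^ t ∣ (firstOrderOp R 0 ^ k) P := by
  induction k with
  | zero => simpa
  | succ k ih =>
    rw [pow_succ', Module.End.mul_apply, firstOrderOp_zero_apply]
    calc f ^ t ∣ f * f ^ (t - 1) := by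
          rw [← pow_succ']
          exact pow_dvd_pow f (by lia)
      _ ∣ _ := mul_dvd_mul hR (pow_sub_one_dvd_derivative_of_pow_dvd ih)

/-- The indicial polynomials `∏ i < k, (X + m i)` of the operators `(R d/dX)^k` at infinity, for
`R` monic of degree `m + 1`: such an operator multiplies the leading coefficient of a polynomial
of degree `d` by the value at `d`. -/
noncomputable def indicialSequence (F : Type*) [CommRing F] [Nontrivial F] (m : ℕ) :
    Polynomial.Sequence F where
  elems' k := ∏ i ∈ range k, (X + C ((m : F) * i))
  degree_eq' k := by
    rw [degree_prod_of_monic _ _ fun i _ => monic_X_add_C _]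
    simp only [degree_X_add_C, sum_const, card_range, nsmul_one]

variable [Nontrivial F]

theorem eval_indicialSequence (m k : ℕ) (x : F) :
    (indicialSequence F m k).eval x = ∏ i ∈ range k, (x + m * i) := by
  change eval x (∏ i ∈ range k, (X + C ((m : F) * i))) = _
  simp [eval_prod]

theorem coeff_firstOrderOp_pow {R : F[X]} {m d : ℕ} (hR : R.natDegree = m + 1) (hRm : R.Monic)
    {Q : F[X]} (hQ : Q.natDegree ≤ d) (k : ℕ) :
    ((firstOrderOp R 0 ^ k) Q).coeff (d + m * k) =
      (indicialSequence F m k).eval (d : F) * Q.coeff d := by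
  rw [eval_indicialSequence]
  induction k with
  | zero => simp
  | succ k ih =>
    rw [pow_succ', Module.End.mul_apply, firstOrderOp_zero_apply, prod_range_succ, mul_right_comm,
      ← ih]
    have hdeg := natDegree_firstOrderOp_pow_le hR.le (by simp) hQ k (L := 0)
    set P := (firstOrderOp R 0 ^ k) Q
    obtain h0 | ⟨r, hr⟩ : d + m * k = 0 ∨ ∃ r, d + m * k = r + 1 := by
      cases h : d + m * k <;> simp
    · have hcast : (d : F) + m * k = 0 := mod_cast congrArg (Nat.cast : ℕ → F) h0
      simp [derivative_of_natDegree_zero (p := P) (by lia), hcast]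
    · have hcast : (d : F) + m * k = r + 1 := mod_cast congrArg (Nat.cast : ℕ → F) hr
      have hder : (derivative P).natDegree ≤ r := (natDegree_derivative_le P).trans (by lia)
      rw [show d + m * (k + 1) = (m + 1) + r by lia, coeff_mul_add_eq_of_natDegree_le hR.le hder,
        ← hR, hRm.coeff_natDegree, one_mul, coeff_derivative, hr, hcast]

theorem coeff_mul_firstOrderOp_pow {R : F[X]} {m M d : ℕ} (hR : R.natDegree = m + 1)
    (hRm : R.Monic) {c Q : F[X]} {k : ℕ} (hc : (c * X ^ (m * k)).natDegree ≤ M)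
    (hQ : Q.natDegree ≤ d) :
    (c * (firstOrderOp R 0 ^ k) Q).coeff (M + d) =
      (c * X ^ (m * k)).coeff M * (indicialSequence F m k).eval (d : F) * Q.coeff d := by
  rcases eq_or_ne c 0 with rfl | hc0
  · simp
  rw [natDegree_mul_X_pow _ hc0] at hc
  obtain ⟨r, rfl⟩ := Nat.exists_eq_add_of_le' (le_of_add_le_right hc)
  rw [show r + m * k + d = r + (d + m * k) by ring,
    coeff_mul_add_eq_of_natDegree_le (by lia)
      (natDegree_firstOrderOp_pow_le hR.le (by simp) hQ k),
    coeff_firstOrderOp_pow hR hRm hQ, coeff_mul_X_pow, mul_assoc]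

end FirstOrderOp

section Vanishing

variable {F : Type*} [Field F]

theorem natCast_factorial_ne_zero {N k : ℕ} (hN : Set.InjOn (Nat.cast : ℕ → F) (Set.Iio N))
    (hk : k < N) : (k.factorial : F) ≠ 0 := by
  rw [← prod_range_add_one_eq_factorial, Nat.cast_prod, prod_ne_zero_iff]
  intro i hi hzero
  rw [mem_range] at hi
  exact i.succ_ne_zero (hN (Set.mem_Iio.2 (by lia)) (Set.mem_Iio.2 (by lia))
    (hzero.trans Nat.cast_zero.symm))

theorem X_sub_C_pow_succ_dvd {P : F[X]} {x : F} {n : ℕ} (hP : P.IsRoot x)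
    (hder : (X - C x) ^ n ∣ derivative P) (hn : (n.factorial : F) ≠ 0) :
    (X - C x) ^ (n + 1) ∣ P := by
  rcases eq_or_ne P 0 with rfl | hP0
  · simp
  rw [← le_rootMultiplicity_iff hP0]
  refine lt_rootMultiplicity_of_isRoot_iterate_derivative_of_mem_nonZeroDivisors hP0 ?_
    (mem_nonZeroDivisors_of_ne_zero hn)
  rintro (_ | k) hk
  · exact hP
  · rw [Function.iterate_succ_apply, ← dvd_iff_isRoot]
    exact (dvd_pow_self _ (by lia)).trans (pow_sub_dvd_iterate_derivative_of_pow_dvd k hder)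

theorem isCoprime_X_sub_C_pow {P : F[X]} {x : F} (hP : P.eval x ≠ 0) (n : ℕ) :
    IsCoprime ((X - C x) ^ n) P := by
  refine IsCoprime.pow_left ?_
  rwa [(irreducible_X_sub_C x).coprime_iff_not_dvd, dvd_iff_isRoot]

theorem X_sub_C_pow_dvd_of_eval_firstOrderOp_pow_eq_zero {R P : F[X]} {x : F} {n : ℕ}
    (hR : R.eval x ≠ 0) (hn : (n.factorial : F) ≠ 0)
    (hP : ∀ k < n, ((firstOrderOp R 0 ^ k) P).eval x = 0) : (X - C x) ^ n ∣ P := by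
  induction n generalizing P with
  | zero => simp
  | succ n ih =>
    have hn' : (n.factorial : F) ≠ 0 := by
      rw [Nat.factorial_succ, Nat.cast_mul] at hn
      exact right_ne_zero_of_mul hn
    have hRP : (X - C x) ^ n ∣ R * derivative P := by
      rw [← firstOrderOp_zero_apply]
      exact ih hn' fun k hk => by simpa [pow_succ] using hP (k + 1) (by lia)
    exact X_sub_C_pow_succ_dvd (by simpa using hP 0 (by lia))
      ((isCoprime_X_sub_C_pow hR n).dvd_of_dvd_mul_left hRP) hn'

theorem card_mul_le_natDegree {P : F[X]} (hP : P ≠ 0) {S : Finset F} {n : ℕ}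
    (hS : ∀ x ∈ S, (X - C x) ^ n ∣ P) : #S * n ≤ P.natDegree := by
  have hdvd : ∏ x ∈ S, (X - C x) ^ n ∣ P := prod_dvd_of_coprime
    (fun x _ y _ hxy => (pairwise_coprime_X_sub_C Function.injective_id hxy).pow) hS
  calc #S * n = (∏ x ∈ S, (X - C x) ^ n).natDegree := by
        rw [natDegree_prod_of_monic _ _ fun x _ => (monic_X_sub_C x).pow n]
        simp only [natDegree_pow, natDegree_X_sub_C, mul_one, sum_const, smul_eq_mul]
    _ ≤ P.natDegree := natDegree_le_of_dvd hdvd hP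

end Vanishing

section Wronskian

theorem dvd_det_mul_of_dvd_mulVec {ι R : Type*} [Fintype ι] [DecidableEq ι] [CommRing R]
    {M : Matrix ι ι R} {v : ι → R} {a : R} (h : ∀ i, a ∣ M.mulVec v i) (j : ι) :
    a ∣ M.det * v j := by
  have hadj : M.adjugate.mulVec (M.mulVec v) j = M.det * v j := by
    simp [Matrix.mulVec_mulVec, Matrix.adjugate_mul, Matrix.smul_mulVec]
  rw [← hadj]
  exact dvd_sum fun i _ => (h i).mul_left _

theorem natDegree_det_le {ι R : Type*} [Fintype ι] [DecidableEq ι] [CommRing R]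
    {M : Matrix ι ι R[X]} {d : ℕ} (hM : ∀ i j, (M i j).natDegree ≤ d) :
    M.det.natDegree ≤ Fintype.card ι * d := by
  rw [Matrix.det_apply]
  refine natDegree_sum_le_of_forall_le _ _ fun σ _ => (natDegree_smul_le _ _).trans ?_
  calc (∏ i, M (σ i) i).natDegree ≤ ∑ i, (M (σ i) i).natDegree := natDegree_prod_le _ _
    _ ≤ ∑ _i : ι, d := sum_le_sum fun i _ => hM _ _
    _ = Fintype.card ι * d := by simp

variable {F ι : Type*} [Field F] [Fintype ι]

theorem card_filter_eval_natCast_eq_zero_le [DecidableEq F] {N : ℕ}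
    (hN : Set.InjOn (Nat.cast : ℕ → F) (Set.Iio N)) {q : F[X]} (hq : q ≠ 0) :
    #{z ∈ range N | q.eval ((z : ℕ) : F) = 0} ≤ q.natDegree := by
  rw [← card_image_of_injOn (f := (Nat.cast : ℕ → F)) (hN.mono fun z hz => by simp_all)]
  refine card_le_degree_of_subset_roots fun x hx => ?_
  obtain ⟨z, hz, rfl⟩ := mem_image.1 (Finset.mem_def.2 hx)
  simpa [hq] using (mem_filter.1 hz).2

theorem card_le_of_natDegree_mem {y : ι → F[X]} (hy : LinearIndependent F y) {Z : Finset ℕ}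
    (hZ : ∀ P ∈ Submodule.span F (Set.range y), P ≠ 0 → P.natDegree ∈ Z) :
    Fintype.card ι ≤ #Z := by
  -- A nonzero element of the span is not killed by all coefficients in `Z`: look at its top one.
  let coeffs : F[X] →ₗ[F] (Z → F) := LinearMap.pi fun z => lcoeff F z
  have hdisj : Disjoint (Submodule.span F (Set.range y)) coeffs.ker := by
    rw [Submodule.disjoint_def]
    intro P hP hcoeffs
    by_contra hP0
    exact hP0 (leadingCoeff_eq_zero.1 (congrFun hcoeffs ⟨_, hZ P hP hP0⟩))
  simpa using (hy.map hdisj).fintype_card_le_finrank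

theorem exists_indicial_polynomial {R : F[X]} {m n : ℕ} (hR : R.natDegree = m + 1)
    (hRm : R.Monic) {ν : ι → ℕ} (hν : Function.Injective ν) (hνn : ∀ k, ν k < n) {c : ι → F[X]}
    (hc : c ≠ 0) :
    ∃ q : F[X], q ≠ 0 ∧ q.natDegree < n ∧ ∀ y : F[X], y ≠ 0 →
      ∑ k, c k * (firstOrderOp R 0 ^ ν k) y = 0 → q.eval (y.natDegree : F) = 0 := by
  classical
  obtain ⟨k₀, hk₀⟩ := Function.ne_iff.1 hc
  obtain ⟨k₁, hk₁, hmax⟩ := exists_max_image {k | c k ≠ 0}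
    (fun k => (c k * X ^ (m * ν k)).natDegree) ⟨k₀, by simpa using hk₀⟩
  set M := (c k₁ * X ^ (m * ν k₁)).natDegree with hM
  have hle : ∀ k, (c k * X ^ (m * ν k)).natDegree ≤ M := fun k => by
    by_cases hk : c k = 0
    · simp [hk]
    · exact hmax k (by simpa using hk)
  refine ⟨∑ k, (c k * X ^ (m * ν k)).coeff M • indicialSequence F m (ν k), fun hq => ?_, ?_,
    fun y hy hsum => ?_⟩
  · -- The indicial polynomials have distinct degrees, and the coefficient at `k₁` is a leading one.
    have hlin := (indicialSequence F m).linearIndependent.comp ν hν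
    have hlead := Fintype.linearIndependent_iff.1 hlin _ hq k₁
    rw [hM, coeff_natDegree, leadingCoeff_eq_zero, mul_eq_zero] at hlead
    exact hlead.elim (mem_filter.1 hk₁).2 (pow_ne_zero _ X_ne_zero)
  · refine lt_of_le_of_lt (natDegree_sum_le_of_forall_le _ _ (n := n - 1) fun k _ => ?_)
      (Nat.sub_one_lt_of_lt (hνn k₀))
    refine (natDegree_smul_le _ _).trans ?_
    rw [(indicialSequence F m).natDegree_eq]
    exact Nat.le_sub_one_of_lt (hνn k)
  · have hcoeff := congrArg (coeff · (M + y.natDegree)) hsum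
    simp only [finsetSum_coeff, coeff_mul_firstOrderOp_pow hR hRm (hle _) le_rfl, coeff_zero,
      ← sum_mul] at hcoeff
    simpa [eval_finsetSum, hy] using hcoeff

theorem eq_zero_of_sum_mul_firstOrderOp_pow_eq_zero {R : F[X]} {m N : ℕ}
    (hN : Set.InjOn (Nat.cast : ℕ → F) (Set.Iio N)) (hR : R.natDegree = m + 1) (hRm : R.Monic)
    {y : ι → F[X]} (hy : LinearIndependent F y) (hyN : ∀ j, (y j).degree < N) {ν : ι → ℕ}
    (hν : Function.Injective ν) (hνn : ∀ k, ν k < Fintype.card ι) {c : ι → F[X]}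
    (hc : ∀ j, ∑ k, c k * (firstOrderOp R 0 ^ ν k) (y j) = 0) : c = 0 := by
  classical
  by_contra hc0
  obtain ⟨q, hq0, hqdeg, hq⟩ := exists_indicial_polynomial hR hRm hν hνn hc0
  let ode : F[X] →ₗ[F] F[X] := ∑ k, LinearMap.mulLeft F (c k) ∘ₗ (firstOrderOp R 0 ^ ν k)
  have hode : ∀ P, ode P = ∑ k, c k * (firstOrderOp R 0 ^ ν k) P := by simp [ode]
  have hspan : Submodule.span F (Set.range y) ≤ ode.ker ⊓ degreeLT F N :=
    Submodule.span_le.2 <| Set.range_subset_iff.2 fun j =>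
      ⟨(hode _).trans (hc j), mem_degreeLT.2 (hyN j)⟩
  have hcard : Fintype.card ι ≤ #{z ∈ range N | q.eval ((z : ℕ) : F) = 0} :=
    card_le_of_natDegree_mem hy fun P hP hP0 => by
      obtain ⟨hker, hdeg⟩ := hspan hP
      exact mem_filter.2 ⟨mem_range.2 ((natDegree_lt_iff_degree_lt hP0).2 (mem_degreeLT.1 hdeg)),
        hq P hP0 ((hode P).symm.trans hker)⟩
  exact absurd (hcard.trans (card_filter_eval_natCast_eq_zero_le hN hq0)) hqdeg.not_ge

theorem le_of_X_sub_C_pow_dvd_sum [Nonempty ι] {R : F[X]} {m A N t : ℕ}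
    (hN : Set.InjOn (Nat.cast : ℕ → F) (Set.Iio N)) (hR : R.natDegree = m + 1) (hRm : R.Monic)
    {x : F} (hx : R.IsRoot x) {E L Q : ι → F[X]}
    (hE : ∀ j, R * derivative (E j) = L j * E j) (hL : ∀ j, (L j).natDegree ≤ m)
    (hEx : ∀ j, (E j).eval x ≠ 0) (hQ : ∀ j, (Q j).natDegree ≤ A)
    (hEQ : ∀ j, (E j * Q j).degree < N) (hlin : LinearIndependent F fun j => E j * Q j)
    (hdvd : (X - C x) ^ t ∣ ∑ j, E j * Q j) :
    t ≤ Fintype.card ι * (A + m * Fintype.card ι) := by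
  classical
  let ν : ι → ℕ := fun k => Fintype.equivFin ι k
  have hν : Function.Injective ν := Fin.val_injective.comp (Fintype.equivFin ι).injective
  have hνn : ∀ k, ν k < Fintype.card ι := fun k => (Fintype.equivFin ι k).is_lt
  let W : Matrix ι ι F[X] := .of fun k j => (firstOrderOp R (L j) ^ ν k) (Q j)
  have hWE : ∀ k, W.mulVec E k = (firstOrderOp R 0 ^ ν k) (∑ j, E j * Q j) := fun k => by
    simp only [map_sum, firstOrderOp_pow_mul (hE _), Matrix.mulVec, dotProduct, W, Matrix.of_apply,
      mul_comm]
  have hW : W.det ≠ 0 := fun hdet => by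
    obtain ⟨c, hc0, hc⟩ := Matrix.exists_vecMul_eq_zero_iff.2 hdet
    refine hc0 (eq_zero_of_sum_mul_firstOrderOp_pow_eq_zero hN hR hRm hlin hEQ hν hνn
      fun j => ?_)
    calc ∑ k, c k * (firstOrderOp R 0 ^ ν k) (E j * Q j) = E j * ∑ k, c k * W k j := by
          simp only [firstOrderOp_pow_mul (hE j), mul_sum, W, Matrix.of_apply, mul_left_comm]
      _ = 0 := by rw [show ∑ k, c k * W k j = 0 from congrFun hc j, mul_zero]
  have hdvd_det : (X - C x) ^ t ∣ W.det := by
    obtain ⟨j⟩ := ‹Nonempty ι›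
    refine (isCoprime_X_sub_C_pow (hEx j) t).dvd_of_dvd_mul_right
      (dvd_det_mul_of_dvd_mulVec (fun k => ?_) j)
    rw [hWE]
    exact pow_dvd_firstOrderOp_pow (dvd_iff_isRoot.2 hx) hdvd _
  calc t = ((X - C x) ^ t).natDegree := by simp
    _ ≤ W.det.natDegree := natDegree_le_of_dvd hdvd_det hW
    _ ≤ _ := natDegree_det_le fun k j =>
      (natDegree_firstOrderOp_pow_le hR.le (hL j) (hQ j) (ν k)).trans
        (by have := Nat.mul_le_mul_left m (hνn k).le; lia)

theorem sum_mul_eq_zero_of_X_sub_C_pow_dvd {R : F[X]} {m A N t : ℕ}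
    (hN : Set.InjOn (Nat.cast : ℕ → F) (Set.Iio N)) (hR : R.natDegree = m + 1) (hRm : R.Monic)
    {x : F} (hx : R.IsRoot x) {E L Q : ι → F[X]}
    (hE : ∀ j, R * derivative (E j) = L j * E j) (hL : ∀ j, (L j).natDegree ≤ m)
    (hEx : ∀ j, (E j).eval x ≠ 0) (hQ : ∀ j, (Q j).natDegree ≤ A)
    (hEQ : ∀ j, (E j * Q j).degree < N)
    (hindep : ∀ P : ι → F[X], (∀ j, (P j).natDegree ≤ A) → ∑ j, E j * P j = 0 → P = 0)
    (ht : Fintype.card ι * (A + m * Fintype.card ι) < t)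
    (hdvd : (X - C x) ^ t ∣ ∑ j, E j * Q j) : ∑ j, E j * Q j = 0 := by
  classical
  -- Discarding the zero summands makes the remaining ones linearly independent.
  let J : Finset ι := {j | Q j ≠ 0}
  have hsumJ : ∀ g : ι → F[X], (∀ j, Q j = 0 → g j = 0) → ∑ j : J, g j = ∑ j, g j := fun g hg => by
    rw [sum_coe_sort J g]
    exact sum_subset (subset_univ J) fun j _ hj => hg j (by simpa [J] using hj)
  have hlin : LinearIndepOn F (fun j => E j * Q j) (J : Set ι) := by
    refine linearIndepOn_finset_iff.2 fun g hg j hj => ?_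
    have hP : (fun j => C (if j ∈ J then g j else 0) * Q j) = 0 := by
      refine hindep _ (fun j => (natDegree_C_mul_le _ _).trans (hQ j)) ?_
      rw [← hg, ← sum_subset (subset_univ J) fun j _ hj => by simp [hj]]
      exact sum_congr rfl fun j hj => by simp [hj, smul_eq_C_mul, mul_left_comm]
    simpa [hj, (mem_filter.1 hj).2] using congrFun hP j
  by_contra hne
  have : Nonempty J := by
    obtain ⟨j, -, hj⟩ := exists_ne_zero_of_sum_ne_zero hne
    exact ⟨j, by simpa [J] using right_ne_zero_of_mul hj⟩
  have hcard : Fintype.card J ≤ Fintype.card ι := Fintype.card_subtype_le _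
  refine ht.not_ge (le_trans ?_ (Nat.mul_le_mul hcard
    (Nat.add_le_add_left (Nat.mul_le_mul_left m hcard) A)))
  refine le_of_X_sub_C_pow_dvd_sum (ι := J) hN hR hRm hx (fun j => hE j) (fun j => hL j)
    (fun j => hEx j) (fun j => hQ j) (fun j => hEQ j) hlin ?_
  rwa [hsumJ (fun j => E j * Q j) fun j hj => by simp [hj]]

end Wronskian

section ShiftMonomial

variable {F ι : Type*} [CommRing F] [Fintype ι]

/-- The product of powers of shifts `∏ i, (X - η i) ^ e i`. -/
noncomputable def shiftMonomial (η : ι → F) (e : ι → ℕ) : F[X] :=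
  ∏ i, (X - C (η i)) ^ e i

/-- The logarithmic derivative of `shiftMonomial η e`, cleared of denominators by multiplication
with `∏ i, (X - η i)`. -/
noncomputable def logDerivNumerator [DecidableEq ι] (η : ι → F) (e : ι → ℕ) : F[X] :=
  ∑ i, C (e i : F) * nodal (univ.erase i) η

theorem eval_shiftMonomial (η : ι → F) (e : ι → ℕ) (x : F) :
    (shiftMonomial η e).eval x = ∏ i, (x - η i) ^ e i := by
  simp [shiftMonomial, eval_prod]

theorem shiftMonomial_fin_succ {n : ℕ} (η : Fin (n + 1) → F) (e : Fin (n + 1) → ℕ) :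
    shiftMonomial η e = (X - C (η 0)) ^ e 0 * shiftMonomial (Fin.tail η) (Fin.tail e) :=
  Fin.prod_univ_succ _

theorem nodal_mul_derivative_shiftMonomial [DecidableEq ι] (η : ι → F) (e : ι → ℕ) :
    nodal univ η * derivative (shiftMonomial η e) = logDerivNumerator η e * shiftMonomial η e := by
  rw [shiftMonomial, derivative_prod_finset, logDerivNumerator, mul_sum, sum_mul]
  refine sum_congr rfl fun i hi => ?_
  have hpow : (X - C (η i)) * derivative ((X - C (η i)) ^ e i) =
      C (e i : F) * (X - C (η i)) ^ e i := by
    rw [derivative_X_sub_C_pow]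
    cases e i with
    | zero => simp
    | succ n => rw [Nat.add_sub_cancel, pow_succ']; ring
  rw [nodal_eq_mul_nodal_erase hi, ← mul_prod_erase univ _ hi]
  linear_combination nodal (univ.erase i) η * (∏ j ∈ univ.erase i, (X - C (η j)) ^ e j) * hpow

variable [Nontrivial F]

theorem natDegree_logDerivNumerator_le [DecidableEq ι] (η : ι → F) (e : ι → ℕ) :
    (logDerivNumerator η e).natDegree ≤ Fintype.card ι - 1 :=
  natDegree_sum_le_of_forall_le _ _ fun i _ => (natDegree_C_mul_le _ _).trans
    (by rw [natDegree_nodal, card_erase_of_mem (mem_univ i), card_univ])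

theorem natDegree_shiftMonomial_le {η : ι → F} {e : ι → ℕ} {d : ℕ} (he : ∀ i, e i ≤ d) :
    (shiftMonomial η e).natDegree ≤ Fintype.card ι * d := by
  rw [shiftMonomial, natDegree_prod_of_monic _ _ fun i _ => (monic_X_sub_C _).pow _]
  calc ∑ i, ((X - C (η i)) ^ e i).natDegree = ∑ i, e i := by
        simp only [(monic_X_sub_C _).natDegree_pow, natDegree_X_sub_C, mul_one]
    _ ≤ ∑ _i : ι, d := sum_le_sum fun i _ => he i
    _ = Fintype.card ι * d := by simp

end ShiftMonomial

section Independence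

theorem eq_zero_of_sum_pow_mul_eq_zero {R : Type*} [CommRing R] [IsDomain R] {f : R} (hf : f ≠ 0)
    {t B : ℕ} {G : Fin B → R} (hG : ∀ k, f ^ t ∣ G k → G k = 0)
    (hsum : ∑ k : Fin B, f ^ (t * (k : ℕ)) * G k = 0) : G = 0 := by
  induction B with
  | zero => exact Subsingleton.elim _ _
  | succ B ih =>
    have hsplit : G 0 + f ^ t * ∑ k : Fin B, f ^ (t * (k : ℕ)) * G k.succ = 0 := by
      rw [← hsum, Fin.sum_univ_succ, mul_sum]
      simp only [Fin.val_zero, Fin.val_succ, mul_zero, pow_zero, one_mul, mul_add_one, pow_add]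
      exact congrArg (G 0 + ·) (sum_congr rfl fun k _ => by ring)
    have hG0 : G 0 = 0 := hG 0 ⟨-_, by rw [mul_neg]; exact eq_neg_of_add_eq_zero_left hsplit⟩
    rw [hG0, zero_add] at hsplit
    have hGsucc : (fun k : Fin B => G k.succ) = 0 :=
      ih (fun k => hG k.succ) ((mul_eq_zero.1 hsplit).resolve_left (pow_ne_zero t hf))
    exact funext fun k => Fin.cases hG0 (congrFun hGsucc) k

variable {F : Type*} [Field F]

theorem sum_shiftMonomial_tail_mul_eq_zero {n A B t N : ℕ}
    (hN : Set.InjOn (Nat.cast : ℕ → F) (Set.Iio N)) {η : Fin (n + 1) → F}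
    (hη : Function.Injective η) (ht : B ^ n * (A + n * B ^ n) < t) (hAN : A + n * (t * B) < N)
    (hindep : ∀ P : (Fin n → Fin B) → F[X], (∀ b, (P b).natDegree ≤ A) →
      ∑ b, shiftMonomial (Fin.tail η) (fun i => t * b i) * P b = 0 → P = 0)
    {Q : (Fin n → Fin B) → F[X]} (hQ : ∀ b, (Q b).natDegree ≤ A)
    (hdvd : (X - C (η 0)) ^ t ∣ ∑ b, shiftMonomial (Fin.tail η) (fun i => t * b i) * Q b) :
    ∑ b, shiftMonomial (Fin.tail η) (fun i => t * b i) * Q b = 0 := by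
  let e (b : Fin n → Fin B) : Fin (n + 1) → ℕ := Fin.cons 0 fun i => t * (b i : ℕ)
  have he (b) : shiftMonomial (Fin.tail η) (fun i => t * b i) = shiftMonomial η (e b) := by
    simp [shiftMonomial_fin_succ, e]
  refine sum_mul_eq_zero_of_X_sub_C_pow_dvd hN (R := nodal univ η) (m := n) (x := η 0)
    (L := fun b => logDerivNumerator η (e b)) (by simp [natDegree_nodal]) nodal_monic
    (eval_nodal_at_node (mem_univ 0)) (fun b => ?_) (fun b => ?_) (fun b => ?_) hQ (fun b => ?_)
    hindep (by simpa using ht) hdvd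
  · rw [he, nodal_mul_derivative_shiftMonomial]
  · simpa using natDegree_logDerivNumerator_le η (e b)
  · rw [eval_shiftMonomial, prod_ne_zero_iff]
    exact fun i _ => pow_ne_zero _ (sub_ne_zero.2 (hη.ne i.succ_ne_zero.symm))
  · have hdeg := natDegree_shiftMonomial_le (η := Fin.tail η) (e := fun i => t * (b i : ℕ))
      fun i => Nat.mul_le_mul_left t (b i).is_lt.le
    rw [Fintype.card_fin] at hdeg
    exact degree_le_natDegree.trans_lt (Nat.cast_lt.2
      (natDegree_mul_le.trans_lt (by have := hQ b; lia)))

theorem eq_zero_of_sum_shiftMonomial_mul_eq_zero {m n A B t N : ℕ}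
    (hN : Set.InjOn (Nat.cast : ℕ → F) (Set.Iio N)) (ht : B ^ m * (A + m * B ^ m) < t)
    (hn : n ≤ m + 1) (hAN : A + n * (t * B) ≤ N) {η : Fin n → F} (hη : Function.Injective η)
    {Q : (Fin n → Fin B) → F[X]} (hQ : ∀ b, (Q b).natDegree ≤ A)
    (hsum : ∑ b, shiftMonomial η (fun i => t * b i) * Q b = 0) : Q = 0 := by
  induction n with
  | zero =>
    funext b
    simpa [shiftMonomial, Subsingleton.elim b default] using hsum
  | succ n ih =>
    rcases Nat.eq_zero_or_pos B with rfl | hB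
    · exact funext fun b => (b 0).elim0
    have htB : 0 < t * B := Nat.mul_pos (Nat.zero_lt_of_lt ht) hB
    have hAN' : A + n * (t * B) < N := by lia
    have hindep : ∀ P : (Fin n → Fin B) → F[X], (∀ b, (P b).natDegree ≤ A) →
        ∑ b, shiftMonomial (Fin.tail η) (fun i => t * b i) * P b = 0 → P = 0 :=
      fun P hP hPsum => ih (by lia) hAN'.le (hη.comp (Fin.succ_injective n)) hP hPsum
    have hBn : B ^ n ≤ B ^ m := Nat.pow_le_pow_right hB (by lia)
    have htn : B ^ n * (A + n * B ^ n) < t := lt_of_le_of_lt (Nat.mul_le_mul hBn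
      (Nat.add_le_add_left (Nat.mul_le_mul (by lia) hBn) A)) ht
    let digit (k : Fin B) : F[X] :=
      ∑ b : Fin n → Fin B, shiftMonomial (Fin.tail η) (fun i => t * b i) * Q (Fin.cons k b)
    have hdigits : ∑ k : Fin B, (X - C (η 0)) ^ (t * (k : ℕ)) * digit k = 0 := by
      rw [← hsum, ← (Fin.consEquiv fun _ => Fin B).sum_comp, Fintype.sum_prod_type]
      refine sum_congr rfl fun k _ => ?_
      rw [mul_sum]
      refine sum_congr rfl fun b _ => ?_
      rw [shiftMonomial_fin_succ, mul_assoc]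
      rfl
    have hdigit : digit = 0 := eq_zero_of_sum_pow_mul_eq_zero (X_sub_C_ne_zero _)
      (fun k => sum_shiftMonomial_tail_mul_eq_zero hN hη htn hAN' hindep fun b => hQ _) hdigits
    funext b
    have hQcons := hindep _ (fun _ => hQ _) (congrFun hdigit (b 0))
    simpa [Fin.cons_self_tail] using congrFun hQcons (Fin.tail b)

end Independence

section Stepanov

variable {F : Type*} [Field F]

theorem exists_ne_zero_forall_map_eq_zero {V κ : Type*} [AddCommGroup V] [Module F V]
    [FiniteDimensional F V] [Fintype κ] {d : ℕ} (T : κ → V →ₗ[F] F[X])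
    (hT : ∀ k v, (T k v).degree < d) (hd : Fintype.card κ * d < Module.finrank F V) :
    ∃ v, v ≠ 0 ∧ ∀ k, T k v = 0 := by
  let coeffs : V →ₗ[F] (κ × Fin d → F) := LinearMap.pi fun kd => lcoeff F kd.2 ∘ₗ T kd.1
  obtain ⟨v, hv, hv0⟩ := Submodule.exists_mem_ne_zero_of_ne_bot
    (LinearMap.ker_ne_bot_of_finrank_lt (f := coeffs) (by simpa using hd))
  refine ⟨v, hv0, fun k => ?_⟩
  ext i
  rw [coeff_zero]
  by_cases hi : i < d
  · exact congrFun hv (k, ⟨i, hi⟩)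
  · exact coeff_eq_zero_of_degree_lt ((hT k v).trans_le (Nat.cast_le.2 (not_lt.1 hi)))

theorem exists_sum_smul_firstOrderOp_pow_eq_zero {κ : Type*} [Fintype κ] {R : F[X]} {m A : ℕ}
    (hR : R.natDegree ≤ m + 1) {L : κ → F[X]} (hL : ∀ b, (L b).natDegree ≤ m) (hA : 0 < A)
    (hcard : (m + 1) * A < Fintype.card κ) (a : κ → F) :
    ∃ Q : κ → F[X], Q ≠ 0 ∧ (∀ b, (Q b).natDegree < A) ∧
      ∀ k < A, ∑ b, a b • (firstOrderOp R (L b) ^ k) (Q b) = 0 := by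
  let T (k : Fin A) : (κ → degreeLT F A) →ₗ[F] F[X] :=
    ∑ b, a b • ((firstOrderOp R (L b) ^ (k : ℕ)) ∘ₗ (degreeLT F A).subtype ∘ₗ LinearMap.proj b)
  have hT : ∀ k Q, T k Q = ∑ b, a b • (firstOrderOp R (L b) ^ (k : ℕ)) (Q b : F[X]) := by simp [T]
  have hdeg (Q : κ → degreeLT F A) (b : κ) : (Q b : F[X]).natDegree < A := by
    rcases eq_or_ne (Q b : F[X]) 0 with h0 | h0
    · simpa [h0] using hA
    · exact (natDegree_lt_iff_degree_lt h0).2 (mem_degreeLT.1 (Q b).2)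
  have hTdeg : ∀ k Q, (T k Q).degree < ((m + 1) * A : ℕ) := fun k Q => by
    refine degree_le_natDegree.trans_lt (Nat.cast_lt.2 ?_)
    refine lt_of_le_of_lt (b := (A - 1) + m * k) ?_
      (by have := Nat.mul_le_mul_left m k.is_lt.le; lia)
    rw [hT]
    exact natDegree_sum_le_of_forall_le _ _ fun b _ => (natDegree_smul_le _ _).trans
      (natDegree_firstOrderOp_pow_le hR (hL b) (Nat.le_sub_one_of_lt (hdeg Q b)) k)
  have : FiniteDimensional F (degreeLT F A) := (degreeLTEquiv F A).symm.finiteDimensional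
  obtain ⟨Q, hQ0, hQ⟩ := exists_ne_zero_forall_map_eq_zero T hTdeg (by
    rw [Module.finrank_pi_fintype]
    simp only [(degreeLTEquiv F A).finrank_eq, Module.finrank_fin_fun, Fintype.card_fin, sum_const,
      card_univ, smul_eq_mul]
    rw [mul_comm A]
    exact Nat.mul_lt_mul_of_pos_right hcard hA)
  refine ⟨fun b => Q b, fun h => hQ0 (funext fun b => Subtype.ext (congrFun h b)), hdeg Q,
    fun k hk => ?_⟩
  rw [← hT ⟨k, hk⟩, hQ]

theorem eval_firstOrderOp_pow_sum {κ : Type*} [Fintype κ] {R : F[X]} {E L Q : κ → F[X]}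
    (hE : ∀ b, R * derivative (E b) = L b * E b) (k : ℕ) (x : F) :
    ((firstOrderOp R 0 ^ k) (∑ b, E b * Q b)).eval x =
      (∑ b, (E b).eval x • (firstOrderOp R (L b) ^ k) (Q b)).eval x := by
  simp only [map_sum, firstOrderOp_pow_mul (hE _), eval_finsetSum, eval_mul, eval_smul, smul_eq_mul]

/-- In the auxiliary polynomial, `A` bounds the degrees of the coefficients and is the order of
vanishing on `S`, while `B` bounds the digits `b i` in the exponents `t * b i`. -/
theorem card_mul_le_of_sub_pow_eq {m A B t : ℕ} (hA : 0 < A) (hAB : (m + 1) * A < B ^ (m + 1))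
    (ht : B ^ m * (A + m * B ^ m) < t)
    (hN : Set.InjOn (Nat.cast : ℕ → F) (Set.Iio (A + (m + 1) * (t * B))))
    {η c : Fin (m + 1) → F} (hη : Function.Injective η) (hc : ∀ i, c i ≠ 0) {S : Finset F}
    (hS : ∀ x ∈ S, ∀ i, (x - η i) ^ t = c i) : #S * A ≤ A + (m + 1) * (t * B) := by
  let E (b : Fin (m + 1) → Fin B) : F[X] := shiftMonomial η fun i => t * b i
  let L (b : Fin (m + 1) → Fin B) : F[X] := logDerivNumerator η fun i => t * b i
  obtain ⟨Q, hQ0, hQA, hQ⟩ := exists_sum_smul_firstOrderOp_pow_eq_zero (R := nodal univ η)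
    (L := L) (m := m) (by simp [natDegree_nodal])
    (fun b => by simpa using natDegree_logDerivNumerator_le η _) hA (by simpa using hAB)
    fun b => ∏ i, c i ^ (b i : ℕ)
  have ht0 : 0 < t := Nat.zero_lt_of_lt ht
  have hB0 : 0 < B := Nat.pos_of_ne_zero fun h => by simp [h] at hAB
  have hP0 : ∑ b, E b * Q b ≠ 0 := fun h => hQ0 <|
    eq_zero_of_sum_shiftMonomial_mul_eq_zero hN ht le_rfl le_rfl hη (fun b => (hQA b).le) h
  have hvanish : ∀ x ∈ S, (X - C x) ^ A ∣ ∑ b, E b * Q b := fun x hx => by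
    have hxη : ∀ i ∈ univ, x ≠ η i := fun i _ h => hc i <| by
      rw [← hS x hx i, h, sub_self, zero_pow ht0.ne']
    have hEx : ∀ b, (E b).eval x = ∏ i, c i ^ (b i : ℕ) := fun b => by
      simp only [E, eval_shiftMonomial, pow_mul, hS x hx]
    refine X_sub_C_pow_dvd_of_eval_firstOrderOp_pow_eq_zero (eval_nodal_not_at_node hxη)
      (natCast_factorial_ne_zero hN (by have := Nat.mul_pos ht0 hB0; lia)) fun k hk => ?_
    rw [eval_firstOrderOp_pow_sum (E := E) (L := L) fun b => nodal_mul_derivative_shiftMonomial η _]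
    simp only [hEx]
    rw [hQ k hk, eval_zero]
  refine (card_mul_le_natDegree hP0 hvanish).trans
    (natDegree_sum_le_of_forall_le _ _ fun b _ => natDegree_mul_le.trans ?_)
  have hE : (E b).natDegree ≤ Fintype.card (Fin (m + 1)) * (t * B) :=
    natDegree_shiftMonomial_le fun i => Nat.mul_le_mul_left t (b i).is_lt.le
  rw [Fintype.card_fin] at hE
  have := hQA b
  lia

theorem card_mul_pow_le_of_sub_pow_eq {m t u : ℕ} (hu : 0 < u)
    (ht : (2 * (m + 1) ^ 2 * u) ^ (2 * m + 1) ≤ t)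
    (hN : Set.InjOn (Nat.cast : ℕ → F) (Set.Iio ((2 * (m + 1) ^ 2 * u + 1) * t)))
    {η c : Fin (m + 1) → F} (hη : Function.Injective η) (hc : ∀ i, c i ≠ 0) {S : Finset F}
    (hS : ∀ x ∈ S, ∀ i, (x - η i) ^ t = c i) :
    #S * (2 * (m + 1) * u) ^ m ≤ 2 * (m + 1) * (m + 2) * t := by
  set B := 2 * (m + 1) * u with hB
  have hB0 : 0 < B := by positivity
  have hA0 : 0 < B ^ m * u := by positivity
  have hAB : (m + 1) * (B ^ m * u) < B ^ (m + 1) := by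
    have : 0 < (m + 1) * (B ^ m * u) := by positivity
    have : B ^ (m + 1) = 2 * ((m + 1) * (B ^ m * u)) := by rw [pow_succ, hB]; ring
    lia
  have hBt : B ^ m * (B ^ m * u + m * B ^ m) < t := by
    calc B ^ m * (B ^ m * u + m * B ^ m) = B ^ (2 * m) * (u + m) := by ring
      _ < B ^ (2 * m) * ((m + 1) * B) :=
        Nat.mul_lt_mul_of_pos_left (by rw [hB]; nlinarith) (by positivity)
      _ ≤ ((m + 1) * B) ^ (2 * m) * ((m + 1) * B) := by gcongr; lia
      _ = (2 * (m + 1) ^ 2 * u) ^ (2 * m + 1) := by rw [hB]; ring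
      _ ≤ t := ht
  have hAt : B ^ m * u ≤ t := hBt.le.trans' <|
    (Nat.le_add_right _ _).trans (Nat.le_mul_of_pos_left _ (by positivity))
  have hNB : B ^ m * u + (m + 1) * (t * B) ≤ (2 * (m + 1) ^ 2 * u + 1) * t := by
    rw [show (2 * (m + 1) ^ 2 * u + 1) * t = t + (m + 1) * (t * B) by rw [hB]; ring]
    gcongr
  refine Nat.le_of_mul_le_mul_right (c := u) ?_ hu
  calc #S * B ^ m * u = #S * (B ^ m * u) := mul_assoc _ _ _
    _ ≤ B ^ m * u + (m + 1) * (t * B) :=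
      card_mul_le_of_sub_pow_eq hA0 hAB hBt (hN.mono (Set.Iio_subset_Iio hNB)) hη hc hS
    _ ≤ t * B + (m + 1) * (t * B) :=
      Nat.add_le_add_right (hAt.trans (Nat.le_mul_of_pos_right t hB0)) _
    _ = 2 * (m + 1) * (m + 2) * t * u := by rw [hB]; ring

theorem card_le_of_sub_pow_eq {t : ℕ} (ht : 0 < t) {a c : F} {S : Finset F}
    (hS : ∀ x ∈ S, (x - a) ^ t = c) : #S ≤ t := by
  classical
  calc #S ≤ #(nthRoots t c).toFinset :=
        card_le_card_of_injOn (· - a)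
          (fun x hx => Multiset.mem_toFinset.2 ((mem_nthRoots ht).2 (hS x hx)))
          sub_left_injective.injOn
    _ ≤ t := (Multiset.toFinset_card_le _).trans (card_nthRoots t c)

theorem card_mul_succ_pow_le_of_sub_pow_eq {m s t : ℕ} (ht : 0 < t) (hst : s ^ (2 * m + 1) ≤ t)
    (hN : Set.InjOn (Nat.cast : ℕ → F) (Set.Iio ((s + 1) * t)))
    {η c : Fin (m + 1) → F} (hη : Function.Injective η) (hc : ∀ i, c i ≠ 0) {S : Finset F}
    (hS : ∀ x ∈ S, ∀ i, (x - η i) ^ t = c i) :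
    #S * (s + 1) ^ m ≤ (2 * (m + 1) ^ 2) ^ m * (2 * (m + 1) * (m + 2)) * t := by
  set K := 2 * (m + 1) ^ 2 with hK
  have hsK : s + 1 ≤ K * (s / K + 1) := Nat.lt_mul_div_succ s (by positivity)
  have hKs : K * (s / K) ≤ s := Nat.mul_div_le s K
  rcases Nat.eq_zero_or_pos (s / K) with hu | hu
  · rw [hu, zero_add, mul_one] at hsK
    calc #S * (s + 1) ^ m ≤ t * K ^ m := by
          gcongr
          exact card_le_of_sub_pow_eq ht fun x hx => hS x hx 0
      _ = K ^ m * 1 * t := by ring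
      _ ≤ K ^ m * (2 * (m + 1) * (m + 2)) * t := by gcongr; nlinarith
  · have hsB : s + 1 ≤ K * (2 * (m + 1) * (s / K)) :=
      hsK.trans (Nat.mul_le_mul_left K (by nlinarith))
    calc #S * (s + 1) ^ m ≤ #S * (K * (2 * (m + 1) * (s / K))) ^ m := by gcongr
      _ = K ^ m * (#S * (2 * (m + 1) * (s / K)) ^ m) := by rw [mul_pow]; ring
      _ ≤ K ^ m * (2 * (m + 1) * (m + 2) * t) :=
        Nat.mul_le_mul_left _ <|
          card_mul_pow_le_of_sub_pow_eq hu ((Nat.pow_le_pow_left hKs _).trans hst)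
            (hN.mono (Set.Iio_subset_Iio (by gcongr))) hη hc hS
      _ = _ := by ring

theorem card_le_rpow_of_sub_pow_eq {m t : ℕ} (ht : 0 < t)
    (hN : Set.InjOn (Nat.cast : ℕ → F)
      (Set.Iio ((⌊(t : ℝ) ^ ((1 : ℝ) / (2 * m + 1))⌋₊ + 1) * t)))
    {η c : Fin (m + 1) → F} (hη : Function.Injective η) (hc : ∀ i, c i ≠ 0) {S : Finset F}
    (hS : ∀ x ∈ S, ∀ i, (x - η i) ^ t = c i) :
    (#S : ℝ) ≤ (2 * (m + 1) ^ 2) ^ m * (2 * (m + 1) * (m + 2)) *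
      (t : ℝ) ^ (((m : ℝ) + 1) / (2 * (m : ℝ) + 1)) := by
  set τ : ℝ := (t : ℝ) ^ ((1 : ℝ) / (2 * m + 1)) with hτ
  have hτ0 : 0 < τ := Real.rpow_pos_of_pos (mod_cast ht) _
  have hτt : τ ^ (2 * m + 1) = t := by
    rw [hτ, one_div]
    exact_mod_cast Real.rpow_inv_natCast_pow (n := 2 * m + 1) t.cast_nonneg (by lia)
  have hτm : (t : ℝ) ^ (((m : ℝ) + 1) / (2 * (m : ℝ) + 1)) = τ ^ (m + 1) := by
    rw [hτ, ← Real.rpow_mul_natCast t.cast_nonneg, div_mul_eq_mul_div, one_mul, Nat.cast_add_one]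
  have hfloor : ⌊τ⌋₊ ^ (2 * m + 1) ≤ t := by
    have := pow_le_pow_left₀ (Nat.cast_nonneg _) (Nat.floor_le hτ0.le) (2 * m + 1)
    rw [hτt] at this
    exact_mod_cast this
  rw [hτm]
  refine le_of_mul_le_mul_right ?_ (pow_pos hτ0 m)
  calc (#S : ℝ) * τ ^ m ≤ #S * (⌊τ⌋₊ + 1) ^ m := by gcongr; exact (Nat.lt_floor_add_one τ).le
    _ ≤ (2 * (m + 1) ^ 2) ^ m * (2 * (m + 1) * (m + 2)) * t := by
      exact_mod_cast card_mul_succ_pow_le_of_sub_pow_eq ht hfloor hN hη hc hS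
    _ = _ := by rw [← hτt]; ring

end Stepanov

theorem natCast_injOn_Iio_of_charP {F : Type*} [AddGroupWithOne F] (p : ℕ) [CharP F p]
    {N : ℕ} (hN : p = 0 ∨ N ≤ p) : Set.InjOn (Nat.cast : ℕ → F) (Set.Iio N) := by
  rcases hN with rfl | hN
  · have := CharP.charP_to_charZero F
    exact Nat.cast_injective.injOn
  · exact (CharP.natCast_injOn_Iio F p).mono (Set.Iio_subset_Iio hN)

end VyuginShkredov

open Polynomial VyuginShkredov in
theorem stmt_15_general {F : Type*} [Field F] (p : ℕ) [CharP F p] {m e : ℕ} (he : 0 < e)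
    (hp : p = 0 ∨ (⌊(e : ℝ) ^ ((1 : ℝ) / (2 * m + 1))⌋₊ + 1) * e ≤ p) {ξ μ : Fin m → F}
    (hξ : Function.Injective ξ) (hξ0 : ∀ i, ξ i ≠ 0) (hμ0 : ∀ i, μ i ≠ 0) :
    ({x : F | x ^ e = 1 ∧ ∀ i, ∃ l : F, l ^ e = 1 ∧ x = μ i * l + ξ i}).ncard ≤
      (2 * ((m : ℝ) + 1) ^ 2) ^ m * (2 * (m + 1) * (m + 2)) *
        (e : ℝ) ^ (((m : ℝ) + 1) / (2 * (m : ℝ) + 1)) := by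
  classical
  set G := {x : F | x ^ e = 1 ∧ ∀ i, ∃ l : F, l ^ e = 1 ∧ x = μ i * l + ξ i}
  have hG : G.Finite := (nthRoots e (1 : F)).toFinset.finite_toSet.subset fun x hx =>
    Multiset.mem_toFinset.2 ((mem_nthRoots he).2 hx.1)
  rw [Set.ncard_eq_toFinset_card G hG]
  have hη : Function.Injective (Fin.cons 0 ξ : Fin (m + 1) → F) :=
    Fin.cons_injective_iff.2 ⟨fun ⟨i, hi⟩ => hξ0 i hi, hξ⟩
  have hc : ∀ i, (Fin.cons 1 fun i => μ i ^ e : Fin (m + 1) → F) i ≠ 0 :=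
    Fin.cases one_ne_zero fun i => pow_ne_zero e (hμ0 i)
  refine card_le_rpow_of_sub_pow_eq he (natCast_injOn_Iio_of_charP p hp) hη hc fun x hx => ?_
  obtain ⟨hxe, hxμ⟩ := hG.mem_toFinset.1 hx
  refine Fin.cases (by simpa) fun i => ?_
  obtain ⟨l, hl, hxl⟩ := hxμ i
  rw [Fin.cons_succ, Fin.cons_succ, hxl, add_sub_cancel_right, mul_pow, hl, mul_one]

/-- Vyugin–Shkredov bound for intersections of `G_e` with `m` shifted multiplicative
cosets `μᵢ G_e + ξᵢ`. -/
theorem stmt_15 (m : ℕ) (hm : 1 ≤ m) :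
    ∃ C : ℝ, 0 < C ∧ ∀ (p : ℕ), p.Prime → ∀ e : ℕ, e ∣ p - 1 →
      (2 * m * ⌊(e : ℝ) ^ ((1 : ℝ) / (2 * m + 1))⌋₊ + 2 * m + 2) * e ≤ p →
      ∀ (ξ μ : Fin m → ZMod p), Function.Injective ξ →
        (∀ i, ξ i ≠ 0) → (∀ i, μ i ≠ 0) →
        ({x : ZMod p | x ^ e = 1 ∧
          ∀ i, ∃ l : ZMod p, l ^ e = 1 ∧ x = μ i * l + ξ i}).ncard ≤
            C * (e : ℝ) ^ (((m : ℝ) + 1) / (2 * (m : ℝ) + 1)) := by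
  refine ⟨(2 * ((m : ℝ) + 1) ^ 2) ^ m * (2 * (m + 1) * (m + 2)), by positivity,
    fun p hp e he hpe ξ μ hξ hξ0 hμ0 => ?_⟩
  have : Fact p.Prime := ⟨hp⟩
  have he0 : 0 < e := Nat.pos_of_dvd_of_pos he (Nat.sub_pos_of_lt hp.one_lt)
  refine stmt_15_general p he0 (.inr (hpe.trans' (Nat.mul_le_mul_right e ?_))) hξ hξ0 hμ0
  nlinarith
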